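/- In the biorthogonal setting with N = n + 1, the constant terms of the biorthogonal polynomials satisfy p_{n+1}(0) · q_{n+1}(0) · h_n = h_n − h_{n+1}. -/

import Mathlib

/-! Write `B = circlePairing w`. It is bilinear and satisfies `B (X f) (X g) = B f g`, and reversal of
coefficients swaps its arguments: `B (reflect n g) (reflect n f) = B f g`.

Let `P = p (n+1)`, `Q = q (n+1)` and `D = X * p n - P`, of degree at most `n` with `D(0) = -P(0)`.
Shift invariance makes `D` orthogonal to every `X * g` with `deg g < n`, so `reflect n D` is
right-orthogonal to all polynomials of degree `< n`; since the `h k` do not vanish, this forces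
`reflect n D = -P(0) * q n`, and hence `B D 1 = -P(0) * h n` (the Szegő recurrence).
On the other hand `h n - h (n+1) = B D (X * q n)`. Writing `X * q n = Q - (X * g + Q(0))` with
`deg g < n`, only the constant contributes, and the value is `-Q(0) * B D 1`. -/

open MeasureTheory Polynomial

/-- The pairing `⟨p, q⟩ = (1/2π) ∫₀^{2π} p(e^{iθ}) q(e^{−iθ}) w(θ) dθ`. -/
noncomputable def circlePairing (w : ℝ → ℂ) (p q : Polynomial ℂ) : ℂ :=
  (1 / (2 * (Real.pi : ℂ))) *
    ∫ θ in (0 : ℝ)..(2 * Real.pi),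
      Polynomial.eval (Complex.exp (θ * Complex.I)) p *
        Polynomial.eval (Complex.exp (-(θ * Complex.I))) q * w θ

section Pairing

variable {w : ℝ → ℂ}

lemma circlePairing_integrable (hw : Continuous w) (f g : ℂ[X]) :
    IntervalIntegrable (fun θ : ℝ => eval (Complex.exp (θ * Complex.I)) f *
        eval (Complex.exp (-(θ * Complex.I))) g * w θ) volume 0 (2 * Real.pi) := by
  apply Continuous.intervalIntegrable
  fun_prop

lemma circlePairing_add_left (hw : Continuous w) (f₁ f₂ g : ℂ[X]) :
    circlePairing w (f₁ + f₂) g = circlePairing w f₁ g + circlePairing w f₂ g := by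
  unfold circlePairing
  rw [← mul_add, ← intervalIntegral.integral_add (circlePairing_integrable hw _ _)
    (circlePairing_integrable hw _ _)]
  simp only [eval_add, add_mul]

lemma circlePairing_add_right (hw : Continuous w) (f g₁ g₂ : ℂ[X]) :
    circlePairing w f (g₁ + g₂) = circlePairing w f g₁ + circlePairing w f g₂ := by
  unfold circlePairing
  rw [← mul_add, ← intervalIntegral.integral_add (circlePairing_integrable hw _ _)
    (circlePairing_integrable hw _ _)]
  simp only [eval_add, add_mul, mul_add]

lemma circlePairing_C_mul_left (c : ℂ) (f g : ℂ[X]) :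
    circlePairing w (C c * f) g = c * circlePairing w f g := by
  unfold circlePairing
  rw [mul_left_comm c, ← intervalIntegral.integral_const_mul c]
  simp only [eval_mul, eval_C, mul_assoc]

lemma circlePairing_C_mul_right (c : ℂ) (f g : ℂ[X]) :
    circlePairing w f (C c * g) = c * circlePairing w f g := by
  unfold circlePairing
  rw [mul_left_comm c, ← intervalIntegral.integral_const_mul c]
  simp only [eval_mul, eval_C, mul_assoc, mul_left_comm c]

lemma circlePairing_sub_left (hw : Continuous w) (f₁ f₂ g : ℂ[X]) :
    circlePairing w (f₁ - f₂) g = circlePairing w f₁ g - circlePairing w f₂ g := by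
  rw [eq_sub_iff_add_eq, ← circlePairing_add_left hw, sub_add_cancel]

lemma circlePairing_sub_right (hw : Continuous w) (f g₁ g₂ : ℂ[X]) :
    circlePairing w f (g₁ - g₂) = circlePairing w f g₁ - circlePairing w f g₂ := by
  rw [eq_sub_iff_add_eq, ← circlePairing_add_right hw, sub_add_cancel]

lemma circlePairing_X_mul (f g : ℂ[X]) :
    circlePairing w (X * f) (X * g) = circlePairing w f g := by
  unfold circlePairing
  congr 2
  ext θ
  have h : Complex.exp (θ * Complex.I) * Complex.exp (-(θ * Complex.I)) = 1 := by
    rw [← Complex.exp_add, add_neg_cancel, Complex.exp_zero]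
  simp only [eval_mul, eval_X]
  linear_combination (eval (Complex.exp (θ * Complex.I)) f *
    eval (Complex.exp (-(θ * Complex.I))) g * w θ) * h

lemma circlePairing_reflect {n : ℕ} {f g : ℂ[X]} (hf : f.natDegree ≤ n) (hg : g.natDegree ≤ n) :
    circlePairing w (reflect n g) (reflect n f) = circlePairing w f g := by
  unfold circlePairing
  congr 2
  ext θ
  rw [Complex.exp_neg]
  set u : ℂˣ := Units.mk0 _ (Complex.exp_ne_zero (θ * Complex.I)) with hu
  have e1 := eval₂_reflect_mul_pow (RingHom.id ℂ) (u : ℂ) n f hf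
  have e2 := eval₂_reflect_mul_pow (RingHom.id ℂ) (u : ℂ)⁻¹ n g hg
  simp only [invOf_eq_inv, inv_inv, eval₂_id] at e1 e2
  have hn : (u : ℂ) ^ n * ((u : ℂ)⁻¹) ^ n = 1 := by
    rw [← mul_pow, mul_inv_cancel₀ u.ne_zero, one_pow]
  change eval (u : ℂ) _ * eval (u : ℂ)⁻¹ _ * _ = eval (u : ℂ) _ * eval (u : ℂ)⁻¹ _ * _
  rw [← e1, ← e2]
  linear_combination (-(eval (u : ℂ) (reflect n g) * eval (u : ℂ)⁻¹ (reflect n f) * w θ)) * hn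

end Pairing

/-- A linear functional that kills `b m` for all `m < k`, where `b m` is monic of degree `m`,
kills every polynomial of degree `< k`. -/
lemma eq_zero_of_forall_monic {L : ℂ[X] → ℂ} (hadd : ∀ f g, L (f + g) = L f + L g)
    (hmul : ∀ c f, L (C c * f) = c * L f) {b : ℕ → ℂ[X]} {k : ℕ}
    (hmonic : ∀ m < k, (b m).Monic) (hdeg : ∀ m < k, (b m).natDegree = m)
    (hL : ∀ m < k, L (b m) = 0) {f : ℂ[X]} (hf : f.degree < k) : L f = 0 := by
  induction k generalizing f with
  | zero =>
    have : f = 0 := by simpa using hf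
    simpa [this] using hmul 0 0
  | succ k ih =>
    have hlow : (f - C (f.coeff k) * b k).degree < k := by
      rw [degree_lt_iff_coeff_zero]
      intro m hm
      rcases hm.eq_or_lt with rfl | hm
      · have := (hmonic k k.lt_succ_self).coeff_natDegree
        rw [hdeg k k.lt_succ_self] at this
        simp [this]
      · rw [coeff_sub, coeff_C_mul, coeff_eq_zero_of_natDegree_lt (p := b k)
          (by rw [hdeg k k.lt_succ_self]; exact hm),
          (degree_lt_iff_coeff_zero f _).1 hf m hm]
        simp
    have h0 := ih (fun m hm => hmonic m (by omega)) (fun m hm => hdeg m (by omega))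
      (fun m hm => hL m (by omega)) hlow
    rw [← sub_add_cancel f (C (f.coeff k) * b k), hadd, h0, hmul, hL k k.lt_succ_self]
    simp

/-- Subtracting a monic polynomial of degree `m` from another leaves degree `< m`. -/
lemma degree_sub_lt_of_monic {a b : ℂ[X]} {m : ℕ} (ha : a.Monic) (hb : b.Monic)
    (hda : a.natDegree = m) (hdb : b.natDegree = m) : (a - b).degree < m := by
  have h1 := degree_eq_natDegree ha.ne_zero
  have h2 := degree_eq_natDegree hb.ne_zero
  rw [hda] at h1
  rw [hdb] at h2
  rw [← h1]
  exact degree_sub_lt_left (h1.trans h2.symm) ha.ne_zero (ha.leadingCoeff.trans hb.leadingCoeff.symm)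

theorem biorthogonal_constant_term_identity (w : ℝ → ℂ) (hw : Continuous w)
    (hper : ∀ θ : ℝ, w (θ + 2 * Real.pi) = w θ)
    (n : ℕ) (p q : ℕ → Polynomial ℂ)
    (hpmonic : ∀ m ≤ n + 1, (p m).Monic) (hpdeg : ∀ m ≤ n + 1, (p m).natDegree = m)
    (hqmonic : ∀ m ≤ n + 1, (q m).Monic) (hqdeg : ∀ m ≤ n + 1, (q m).natDegree = m)
    (horth : ∀ i ≤ n + 1, ∀ j ≤ n + 1, i ≠ j → circlePairing w (p i) (q j) = 0)
    (hne : ∀ m ≤ n + 1, circlePairing w (p m) (q m) ≠ 0) :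
    (p (n + 1)).eval 0 * (q (n + 1)).eval 0 * circlePairing w (p n) (q n) =
      circlePairing w (p n) (q n) - circlePairing w (p (n + 1)) (q (n + 1)) := by
  have orthR : ∀ k ≤ n + 1, ∀ g : ℂ[X], g.degree < k → circlePairing w (p k) g = 0 :=
    fun k hk g hg => eq_zero_of_forall_monic (L := fun g => circlePairing w (p k) g)
      (circlePairing_add_right hw _) (fun c => circlePairing_C_mul_right c _)
      (fun m hm => hqmonic m (by omega)) (fun m hm => hqdeg m (by omega))
      (fun m hm => horth k hk m (by omega) (by omega)) hg
  have orthL : ∀ k ≤ n + 1, ∀ f : ℂ[X], f.degree < k → circlePairing w f (q k) = 0 :=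
    fun k hk f hf => eq_zero_of_forall_monic (L := fun f => circlePairing w f (q k))
      (fun f₁ f₂ => circlePairing_add_left hw f₁ f₂ _)
      (fun c f => circlePairing_C_mul_left c f _)
      (fun m hm => hpmonic m (by omega)) (fun m hm => hpdeg m (by omega))
      (fun m hm => horth m (by omega) k hk (by omega)) hf
  have hXmonic : ∀ {f : ℂ[X]}, f.Monic → f.natDegree = n →
      (X * f).Monic ∧ (X * f).natDegree = n + 1 := fun hf hd =>
    ⟨monic_X.mul hf, by rw [natDegree_X_mul hf.ne_zero, hd]⟩
  -- a polynomial of degree at most `n` divided by `X` has degree `< n`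
  have hdivX : ∀ {g : ℂ[X]}, g.degree < ((n + 1 : ℕ) : WithBot ℕ) → g.divX.degree < n := by
    intro g hg
    rw [degree_lt_iff_coeff_zero] at hg ⊢
    intro m hm
    rw [coeff_divX]
    exact hg _ (by omega)
  set P := p (n + 1) with hP
  set Q := q (n + 1) with hQ
  have hpn := hXmonic (hpmonic n (by omega)) (hpdeg n (by omega))
  have hqn := hXmonic (hqmonic n (by omega)) (hqdeg n (by omega))
  set D := X * p n - P with hD
  have hDdeg : D.degree < ((n + 1 : ℕ) : WithBot ℕ) :=
    degree_sub_lt_of_monic hpn.1 (hpmonic _ le_rfl) hpn.2 (hpdeg _ le_rfl)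
  have hDnat : D.natDegree ≤ n := by
    rw [natDegree_le_iff_coeff_eq_zero]
    exact fun m hm => (degree_lt_iff_coeff_zero D _).1 hDdeg m hm
  have hXg : ∀ g : ℂ[X], g.degree < n → (X * g).degree < ((n + 1 : ℕ) : WithBot ℕ) := by
    intro g hg
    rw [degree_lt_iff_coeff_zero] at hg ⊢
    intro m hm
    obtain ⟨m, rfl⟩ := Nat.exists_eq_succ_of_ne_zero (show m ≠ 0 by omega)
    rw [coeff_X_mul]
    exact hg _ (by omega)
  have hDX : ∀ g : ℂ[X], g.degree < n → circlePairing w D (X * g) = 0 := by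
    intro g hg
    rw [hD, circlePairing_sub_left hw, circlePairing_X_mul, orthR n (by omega) g hg,
      orthR (n + 1) le_rfl _ (hXg g hg), sub_zero]
  have hR : ∀ g : ℂ[X], g.degree < n → circlePairing w g (reflect n D) = 0 := by
    intro g hg
    have hgn : g.natDegree ≤ n := natDegree_le_of_degree_le hg.le
    have hRn : (reflect n D).natDegree ≤ n := by
      rw [natDegree_le_iff_coeff_eq_zero]
      intro m hm
      rw [coeff_reflect, revAt_eq_self_of_lt hm]
      exact coeff_eq_zero_of_natDegree_lt (by omega)
    rw [← circlePairing_reflect hgn hRn, reflect_reflect]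
    -- `g` has no `X ^ n` term, so its reflection has no constant term
    have h0 : (reflect n g).coeff 0 = 0 := by
      rw [coeff_reflect, revAt_le (Nat.zero_le n)]
      exact (degree_lt_iff_coeff_zero g n).1 hg _ (by omega)
    have hX := X_mul_divX_add (reflect n g)
    rw [h0, C_0, add_zero] at hX
    rw [← hX]
    apply hDX
    apply hdivX
    rw [degree_lt_iff_coeff_zero]
    intro m hm
    rw [coeff_reflect, revAt_eq_self_of_lt (by omega)]
    exact coeff_eq_zero_of_natDegree_lt (by omega)
  have hS : reflect n D = C (-(P.eval 0)) * q n := by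
    by_contra hcon
    set S := reflect n D - C (-(P.eval 0)) * q n with hSdef
    have hS0 : S ≠ 0 := sub_ne_zero.2 hcon
    have hSdeg : S.degree < n := by
      rw [degree_lt_iff_coeff_zero]
      intro m hm
      rw [hSdef, coeff_sub, coeff_C_mul, coeff_reflect]
      rcases hm.eq_or_lt with rfl | hm
      · have h1 := (hqmonic n (by omega)).coeff_natDegree
        rw [hqdeg n (by omega)] at h1
        rw [h1, revAt_le le_rfl, Nat.sub_self, hD, coeff_sub, coeff_X_mul_zero,
          coeff_zero_eq_eval_zero]
        ring
      · rw [revAt_eq_self_of_lt hm, coeff_eq_zero_of_natDegree_lt (p := D) (by omega),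
          coeff_eq_zero_of_natDegree_lt (p := q n) (by rw [hqdeg n (by omega)]; exact hm)]
        ring
    have hSorth : ∀ g : ℂ[X], g.degree < n → circlePairing w g S = 0 := by
      intro g hg
      rw [hSdef, circlePairing_sub_right hw, hR g hg, circlePairing_C_mul_right,
        orthL n (by omega) g hg]
      ring
    -- pairing with `p k`, where `k = deg S`, picks out the leading coefficient times `h k`
    set k := S.natDegree with hk
    have hkn : k < n := (natDegree_lt_iff_degree_lt hS0).2 hSdeg
    have hlow : (S - C S.leadingCoeff * q k).degree < k := by
      rw [degree_lt_iff_coeff_zero]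
      intro m hm
      rw [coeff_sub, coeff_C_mul]
      rcases hm.eq_or_lt with rfl | hm
      · have h1 := (hqmonic k (by omega)).coeff_natDegree
        rw [hqdeg k (by omega)] at h1
        rw [h1, mul_one, leadingCoeff, sub_self]
      · rw [coeff_eq_zero_of_natDegree_lt (p := S) hm,
          coeff_eq_zero_of_natDegree_lt (p := q k) (by rw [hqdeg k (by omega)]; exact hm)]
        ring
    have h1 := orthR k (by omega) _ hlow
    have hpk : (p k).degree < n := by
      rw [degree_eq_natDegree (hpmonic k (by omega)).ne_zero, hpdeg k (by omega)]
      exact_mod_cast hkn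
    rw [circlePairing_sub_right hw, hSorth _ hpk, circlePairing_C_mul_right, zero_sub,
      neg_eq_zero] at h1
    exact mul_ne_zero (leadingCoeff_ne_zero.2 hS0) (hne k (by omega)) h1
  have hh : circlePairing w (X ^ n) (q n) = circlePairing w (p n) (q n) := by
    rw [← sub_eq_zero, ← circlePairing_sub_left hw]
    exact orthL n (by omega) _ (degree_sub_lt_of_monic (monic_X_pow n) (hpmonic n (by omega))
      (natDegree_X_pow n) (hpdeg n (by omega)))
  have hD1 : circlePairing w D 1 = -(P.eval 0) * circlePairing w (p n) (q n) := by
    rw [← circlePairing_reflect hDnat (by simp), hS, circlePairing_C_mul_right, reflect_one, hh]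
  have hE : (Q - X * q n).degree < ((n + 1 : ℕ) : WithBot ℕ) :=
    degree_sub_lt_of_monic (hqmonic _ le_rfl) hqn.1 (hqdeg _ le_rfl) hqn.2
  have hPQ : circlePairing w P (X * q n) = circlePairing w P Q := by
    have := orthR (n + 1) le_rfl _ hE
    rw [circlePairing_sub_right hw, sub_eq_zero] at this
    exact this.symm
  have hE0 : (Q - X * q n).coeff 0 = Q.eval 0 := by
    rw [coeff_sub, coeff_X_mul_zero, sub_zero, coeff_zero_eq_eval_zero]
  have hDE : circlePairing w D (Q - X * q n) = Q.eval 0 * circlePairing w D 1 := by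
    rw [← X_mul_divX_add (Q - X * q n), circlePairing_add_right hw, hDX _ (hdivX hE), zero_add,
      hE0, ← mul_one (C (Q.eval 0)), circlePairing_C_mul_right]
  rw [circlePairing_sub_right hw, orthL (n + 1) le_rfl D hDdeg, hD1] at hDE
  have hDq : circlePairing w D (X * q n) = circlePairing w (p n) (q n) - circlePairing w P Q := by
    rw [hD, circlePairing_sub_left hw, circlePairing_X_mul, hPQ]
  rw [← hDq]
  linear_combination hDE
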